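/- Let A ⊆ B be a symmetric C*-inclusion with a conditional expectation E : B → A which is residually symmetric. Then A separates ideals in B if and only if E is residually faithful and E preserves ideals. -/

import Mathlib

/- Common definitions for C*-inclusions, ideals, Cuntz subequivalence,
   supporting/filling families and pure infiniteness. -/

namespace KM

variable {B : Type*} [NonUnitalCStarAlgebra B] [PartialOrder B]

/-- `J` is a closed two-sided ideal of the C*-algebra `C` (given as a subset of `B`). -/
def IsIdealIn (C J : Set B) : Prop :=
  J ⊆ C ∧ IsClosed J ∧ (0 : B) ∈ J ∧ (∀ x ∈ J, ∀ y ∈ J, x + y ∈ J) ∧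
    (∀ (c : ℂ), ∀ x ∈ J, c • x ∈ J) ∧ (∀ x ∈ J, ∀ c ∈ C, c * x ∈ J ∧ x * c ∈ J)

/-- `J` is a closed two-sided ideal of `B`. -/
def IsIdeal (J : Set B) : Prop := IsIdealIn Set.univ J

/-- `A` is a C*-subalgebra of `B`: a closed `*`-subalgebra. -/
def IsSubCStar (A : Set B) : Prop :=
  IsClosed A ∧ (0 : B) ∈ A ∧ (∀ x ∈ A, ∀ y ∈ A, x + y ∈ A) ∧
    (∀ (c : ℂ), ∀ x ∈ A, c • x ∈ A) ∧ (∀ x ∈ A, ∀ y ∈ A, x * y ∈ A) ∧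
    (∀ x ∈ A, star x ∈ A)

/-- The smallest closed two-sided ideal of the C*-algebra `C` containing `S`. -/
def idealGenIn (C S : Set B) : Set B := ⋂₀ {J : Set B | IsIdealIn C J ∧ S ⊆ J}

/-- The smallest closed two-sided ideal of `B` containing `S`; for an ideal `I` of a
subalgebra `A` this is the induced ideal `BIB`. -/
def idealGen (S : Set B) : Set B := idealGenIn Set.univ S

/-- `I` is a restricted ideal of the subalgebra `A`, i.e. `I = J ∩ A` for an ideal `J` of `B`. -/
def IsRestricted (A I : Set B) : Prop := ∃ J : Set B, IsIdeal J ∧ I = J ∩ A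

/-- `J` is an induced ideal of `B`: `J = BIB` for some ideal `I` of `A`. -/
def IsInduced (A J : Set B) : Prop := ∃ I : Set B, IsIdealIn A I ∧ J = idealGen I

/-- `A` separates ideals in `B`. -/
def SeparatesIdeals (A : Set B) : Prop :=
  ∀ J₁ J₂ : Set B, IsIdeal J₁ → IsIdeal J₂ → J₁ ∩ A = J₂ ∩ A → J₁ = J₂

/-- Cuntz subequivalence `a ≼ b`. -/
def CuntzBelow (a b : B) : Prop :=
  ∀ ε : ℝ, 0 < ε → ∃ x : B, ‖a - star x * b * x‖ < ε

/-- `F` supports `B`. -/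
def Supports (F : Set B) : Prop :=
  ∀ b : B, 0 ≤ b → b ≠ 0 → ∃ a ∈ F, a ≠ 0 ∧ CuntzBelow a b

/-- `F` residually supports the C*-algebra `C ⊆ B`: for every ideal `J` of `C`, the image
of `F` in `C/J` supports `C/J`, phrased concretely via the distance to `J`. -/
def ResiduallySupportsIn (C F : Set B) : Prop :=
  ∀ J : Set B, IsIdealIn C J → ∀ b ∈ C, 0 ≤ b → b ∉ J →
    ∃ a ∈ F, a ∉ J ∧ ∀ ε : ℝ, 0 < ε → ∃ x ∈ C,
      Metric.infDist (a - star x * b * x) J < ε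

/-- `F` residually supports `B`. -/
def ResiduallySupports (F : Set B) : Prop := ResiduallySupportsIn Set.univ F

/-- `x` lies in `aB = {a c : c ∈ B}`. -/
def MemRightMul (a x : B) : Prop := ∃ c : B, x = a * c

/-- `a` is properly infinite in `B`. -/
def ProperlyInfinite (a : B) : Prop :=
  ∀ ε : ℝ, 0 < ε → ∃ x y : B, MemRightMul a x ∧ MemRightMul a y ∧
    ‖star x * x - a‖ ≤ ε ∧ ‖star y * y - a‖ ≤ ε ∧ ‖star x * y‖ ≤ ε

/-- `a` is infinite in `B`. -/
def InfiniteElt (a : B) : Prop :=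
  ∃ b : B, 0 ≤ b ∧ b ≠ 0 ∧ ∀ ε : ℝ, 0 < ε → ∃ x y : B,
    MemRightMul a x ∧ MemRightMul a y ∧
    ‖star x * x - a‖ ≤ ε ∧ ‖star y * y - b‖ ≤ ε ∧ ‖star x * y‖ ≤ ε

/-- The pair `a, b` is separated in `B`. -/
def SeparatedPair (a b : B) : Prop :=
  ∀ ε : ℝ, 0 < ε → ∃ x y : B, MemRightMul a x ∧ MemRightMul b y ∧
    ‖star x * x - a‖ ≤ ε ∧ ‖star y * y - b‖ ≤ ε ∧ ‖star x * y‖ ≤ ε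

/-- A character of `B`: a nonzero multiplicative linear functional `B → ℂ`. -/
def IsCharacter (φ : B →ₗ[ℂ] ℂ) : Prop :=
  (∀ x y : B, φ (x * y) = φ x * φ y) ∧ φ ≠ 0

/-- `B` is purely infinite: it admits no characters and for nonzero positive `a, b`,
`a ≼ b` iff `a` lies in the ideal generated by `b`. -/
def PurelyInfinite (B : Type*) [NonUnitalCStarAlgebra B] [PartialOrder B] : Prop :=
  (¬ ∃ φ : B →ₗ[ℂ] ℂ, IsCharacter φ) ∧
    ∀ a b : B, 0 ≤ a → a ≠ 0 → 0 ≤ b → b ≠ 0 → (CuntzBelow a b ↔ a ∈ idealGen {b})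

/-- `p` is a projection. -/
def IsProjection (p : B) : Prop := star p = p ∧ p * p = p

/-- `B` has the ideal property: projections separate ideals. -/
def IdealProperty (B : Type*) [NonUnitalCStarAlgebra B] [PartialOrder B] : Prop :=
  ∀ J₁ J₂ : Set B, IsIdeal J₁ → IsIdeal J₂ →
    (∀ p : B, IsProjection p → (p ∈ J₁ ↔ p ∈ J₂)) → J₁ = J₂

/-- `B` is strongly purely infinite: every pair of positive elements is separated. -/
def StronglyPurelyInfinite (B : Type*) [NonUnitalCStarAlgebra B] [PartialOrder B] : Prop :=
  ∀ a b : B, 0 ≤ a → 0 ≤ b → SeparatedPair a b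

/-- `D` is a hereditary C*-subalgebra of `B`. -/
def IsHereditary (D : Set B) : Prop :=
  IsSubCStar D ∧ ∀ b d : B, d ∈ D → 0 ≤ b → b ≤ d → b ∈ D

/-- `F` fills `B`. -/
def Fills (F : Set B) : Prop :=
  ∀ D : Set B, IsHereditary D → (∃ d ∈ D, d ≠ 0) →
    ∀ J : Set B, IsIdeal J → ¬ D ⊆ J →
      ∃ z : B, z ∉ J ∧ z * star z ∈ D ∧ star z * z ∈ F

/-- Closed linear span of a subset of `B`. -/
def closSpan (S : Set B) : Set B := closure ↑(Submodule.span ℂ S)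

/-- The C*-inclusion `A ⊆ B` is symmetric. -/
def SymmetricInclusion (A : Set B) : Prop :=
  ∀ I : Set B, IsRestricted A I →
    closSpan {z : B | ∃ x ∈ I, ∃ b : B, z = x * b} =
      closSpan {z : B | ∃ b : B, ∃ x ∈ I, z = b * x}

/-- `b` is a normaliser of `A` in `B`. -/
def IsNormalizer (A : Set B) (b : B) : Prop :=
  (∀ a ∈ A, b * a * star b ∈ A) ∧ (∀ a ∈ A, star b * a * b ∈ A)

/-- The inclusion `A ⊆ B` is nondegenerate: the closed span of `A·B` is `B`. -/
def Nondegenerate (A : Set B) : Prop :=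
  closSpan {z : B | ∃ a ∈ A, ∃ b : B, z = a * b} = Set.univ

/-- The inclusion `A ⊆ B` is regular: nondegenerate and `B` is the closed linear span of
the normalisers of `A`. -/
def RegularInclusion (A : Set B) : Prop :=
  Nondegenerate A ∧ closSpan {b : B | IsNormalizer A b} = Set.univ

end KM

open KM

variable {B : Type*} [NonUnitalCStarAlgebra B] [PartialOrder B] [StarOrderedRing B]

/-!
For an ideal `J` of `B`, positivity and residual symmetry of `E` make
`N J = {b | E (b* b) ∈ J}` an ideal of `B`, and `N J ∩ A = J ∩ A` because `E` is the identity
on `A`. If `A` separates ideals then `N J = J`, which is residual faithfulness; moreover `J` is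
spanned by the elements `c* c` with `c ∈ J = N J`, so `E` maps `J` into `J`. Conversely, if `E`
preserves ideals then `J ⊆ N J`, and residual faithfulness yields `J = B (J ∩ A) B`, so `J` is
determined by `J ∩ A`.
-/

lemma star_add_mul_self_le {R : Type*} [NonUnitalRing R] [PartialOrder R] [StarRing R]
    [StarOrderedRing R] (x y : R) :
    star (x + y) * (x + y) ≤ (2 : ℕ) • (star x * x + star y * y) := by
  have parallelogram : (2 : ℕ) • (star x * x + star y * y) - star (x + y) * (x + y) =
      star (x - y) * (x - y) := by
    rw [star_add, star_sub]
    noncomm_ring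
  rw [← sub_nonneg, parallelogram]
  exact star_mul_self_nonneg _

lemma norm_sub_mul_le_of_star_mul_self_le {a b : B} (h : star a * a ≤ star b * b) (e : B) :
    ‖a - a * e‖ ≤ ‖b - b * e‖ := by
  have inr_sub_mul (c : B) : ((c - c * e : B) : Unitization ℂ B) = c * (1 - e) := by
    rw [Unitization.inr_sub, Unitization.inr_mul, mul_sub, mul_one]
  have h' : star (a : Unitization ℂ B) * a ≤ star (b : Unitization ℂ B) * b := by
    simpa only [Unitization.inr_mul, Unitization.inr_star] using
      (Unitization.inr_le_iff _ _ (.star_mul_self a) (.star_mul_self b)).2 h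
  have key : star (a * (1 - e) : Unitization ℂ B) * (a * (1 - e)) ≤
      star (b * (1 - e) : Unitization ℂ B) * (b * (1 - e)) := by
    simpa only [star_mul, mul_assoc] using star_left_conjugate_le_conjugate h' (1 - e)
  rw [← Unitization.norm_inr (𝕜 := ℂ), ← Unitization.norm_inr (𝕜 := ℂ) (a := b - b * e),
    inr_sub_mul, inr_sub_mul]
  refine le_of_sq_le_sq ?_ (norm_nonneg _)
  simpa only [sq, CStarRing.norm_star_mul_self] using
    CStarAlgebra.norm_le_norm_of_nonneg_of_le (star_mul_self_nonneg _) key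

namespace KM

section IdealGen

omit [PartialOrder B] [StarOrderedRing B]

lemma isIdeal_idealGen (S : Set B) : IsIdeal (idealGen S) :=
  ⟨Set.subset_univ _, isClosed_sInter fun _ hJ => hJ.1.2.1, fun _ hJ => hJ.1.2.2.1,
    fun x hx y hy J hJ => hJ.1.2.2.2.1 x (hx J hJ) y (hy J hJ),
    fun c x hx J hJ => hJ.1.2.2.2.2.1 c x (hx J hJ),
    fun x hx c hc => ⟨fun J hJ => (hJ.1.2.2.2.2.2 x (hx J hJ) c hc).1,
      fun J hJ => (hJ.1.2.2.2.2.2 x (hx J hJ) c hc).2⟩⟩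

lemma subset_idealGen (S : Set B) : S ⊆ idealGen S := fun _ hx _ hJ => hJ.2 hx

lemma idealGen_subset {S J : Set B} (hJ : IsIdeal J) (h : S ⊆ J) : idealGen S ⊆ J :=
  fun _ hx => hx J ⟨hJ, h⟩

lemma idealGen_inter_inter (A : Set B) {J : Set B} (hJ : IsIdeal J) :
    idealGen (J ∩ A) ∩ A = J ∩ A :=
  Set.Subset.antisymm
    (Set.inter_subset_inter_left _ (idealGen_subset hJ Set.inter_subset_left))
    (Set.subset_inter (subset_idealGen _) Set.inter_subset_right)

lemma separatesIdeals_iff {A : Set B} :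
    SeparatesIdeals A ↔ ∀ J : Set B, IsIdeal J → idealGen (J ∩ A) = J where
  mp hsep J hJ := hsep _ _ (isIdeal_idealGen _) hJ (idealGen_inter_inter A hJ)
  mpr hgen J₁ J₂ h₁ h₂ h := by rw [← hgen J₁ h₁, h, hgen J₂ h₂]

end IdealGen

namespace IsIdeal

variable {J : Set B}

section WithoutOrder

omit [PartialOrder B] [StarOrderedRing B]

lemma isClosed (hJ : IsIdeal J) : IsClosed J := hJ.2.1

lemma mul_mem_left (hJ : IsIdeal J) (c : B) {x : B} (hx : x ∈ J) : c * x ∈ J :=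
  (hJ.2.2.2.2.2 x hx c trivial).1

lemma mul_mem_right (hJ : IsIdeal J) (c : B) {x : B} (hx : x ∈ J) : x * c ∈ J :=
  (hJ.2.2.2.2.2 x hx c trivial).2

protected lemma zero_mem (hJ : IsIdeal J) : (0 : B) ∈ J := hJ.2.2.1

protected lemma add_mem (hJ : IsIdeal J) {x y : B} (hx : x ∈ J) (hy : y ∈ J) : x + y ∈ J :=
  hJ.2.2.2.1 x hx y hy

protected lemma smul_mem (hJ : IsIdeal J) (c : ℂ) {x : B} (hx : x ∈ J) : c • x ∈ J :=
  hJ.2.2.2.2.1 c x hx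

lemma cfcₙ_mem (hJ : IsIdeal J) (f : ℝ → ℝ) {y : B} (hy : y ∈ J) (hsa : IsSelfAdjoint y) :
    cfcₙ f y ∈ J := by
  -- Whether `J` is closed under `star` is not known yet, so work in `J ∩ star J`.
  let S : NonUnitalStarSubalgebra ℂ B :=
    { carrier := J ∩ star ⁻¹' J
      zero_mem' := ⟨hJ.zero_mem, by simpa using hJ.zero_mem⟩
      add_mem' := fun hx hy => ⟨hJ.add_mem hx.1 hy.1, by
        simpa using hJ.add_mem hx.2 hy.2⟩
      smul_mem' := fun c _ hx => ⟨hJ.smul_mem c hx.1, by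
        simpa using hJ.smul_mem (star c) hx.2⟩
      mul_mem' := fun hx hy => ⟨hJ.mul_mem_left _ hy.1, by
        simpa using hJ.mul_mem_left _ hx.2⟩
      star_mem' := fun hx => ⟨hx.2, by simpa using hx.1⟩ }
  have : IsClosed (S : Set B) := hJ.isClosed.inter (hJ.isClosed.preimage continuous_star)
  have hyS : y ∈ S := ⟨hy, by simpa [hsa.star_eq] using hy⟩
  exact (_root_.cfcₙ_mem (𝕜' := ℂ) f hyS).1

lemma exists_norm_sub_mul_le (hJ : IsIdeal J) {s : B} (hs : s ∈ J) (hsa : IsSelfAdjoint s)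
    {ε : ℝ} (hε : 0 < ε) : ∃ e ∈ J, ‖s - s * e‖ ≤ ε := by
  let g : ℝ → ℝ := fun t => min 1 (|t| / ε)
  have hg : Continuous g := by fun_prop
  have hg₀ : g 0 = 0 := by simp [g]
  refine ⟨cfcₙ g s, hJ.cfcₙ_mem g hs hsa, ?_⟩
  have hcfc : s - s * cfcₙ g s = cfcₙ (fun t => t - t * g t) s := by
    rw [cfcₙ_sub (fun t => t) (fun t => t * g t) s, cfcₙ_mul (fun t => t) g s (hg0 := hg₀),
      cfcₙ_id' ℝ s]
  rw [hcfc]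
  refine norm_cfcₙ_le fun t _ => ?_
  rw [Real.norm_eq_abs, ← mul_one_sub, abs_mul]
  rcases le_total ε |t| with ht | ht
  · have : g t = 1 := min_eq_left ((one_le_div hε).2 ht)
    simpa [this] using hε.le
  · have hgt : |1 - g t| ≤ 1 := abs_le.2
      ⟨by linarith [min_le_left 1 (|t| / ε)], by linarith [show 0 ≤ g t by positivity]⟩
    exact (mul_le_of_le_one_right (abs_nonneg t) hgt).trans ht

end WithoutOrder

lemma sqrt_mem (hJ : IsIdeal J) {y : B} (hy : y ∈ J) (hy₀ : 0 ≤ y) : CFC.sqrt y ∈ J := by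
  rw [CFC.sqrt_eq_real_sqrt y]
  exact hJ.cfcₙ_mem _ hy (.of_nonneg hy₀)

lemma mem_of_star_mul_self_le (hJ : IsIdeal J) {a y : B} (hy : y ∈ J) (hay : star a * a ≤ y) :
    a ∈ J := by
  have hy₀ : 0 ≤ y := (star_mul_self_nonneg a).trans hay
  have hsqrt : IsSelfAdjoint (CFC.sqrt y) := .of_nonneg (CFC.sqrt_nonneg y)
  have hle : star a * a ≤ star (CFC.sqrt y) * CFC.sqrt y := by
    rwa [hsqrt.star_eq, CFC.sqrt_mul_sqrt_self y]
  refine (Metric.mem_of_closed' hJ.isClosed).2 fun ε hε => ?_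
  obtain ⟨e, he, hse⟩ := hJ.exists_norm_sub_mul_le (hJ.sqrt_mem hy hy₀) hsqrt (half_pos hε)
  refine ⟨a * e, hJ.mul_mem_left a he, ?_⟩
  calc dist a (a * e) = ‖a - a * e‖ := dist_eq_norm _ _
    _ ≤ ‖CFC.sqrt y - CFC.sqrt y * e‖ := norm_sub_mul_le_of_star_mul_self_le hle e
    _ ≤ ε / 2 := hse
    _ < ε := half_lt_self hε

lemma star_mul_self_mem_iff (hJ : IsIdeal J) {b : B} : star b * b ∈ J ↔ b ∈ J :=
  ⟨fun h => hJ.mem_of_star_mul_self_le h le_rfl, hJ.mul_mem_left (star b)⟩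

lemma star_mem (hJ : IsIdeal J) {b : B} (hb : b ∈ J) : star b ∈ J :=
  hJ.star_mul_self_mem_iff.1 (hJ.mul_mem_right _ (by rwa [star_star]))

lemma mem_of_nonneg_of_le (hJ : IsIdeal J) {x y : B} (hx : 0 ≤ x) (hxy : x ≤ y) (hy : y ∈ J) :
    x ∈ J := by
  obtain ⟨s, rfl⟩ := CStarAlgebra.nonneg_iff_eq_star_mul_self.1 hx
  exact hJ.star_mul_self_mem_iff.2 (hJ.mem_of_star_mul_self_le hy hxy)

open scoped ComplexStarModule in
lemma subset_span_nonneg (hJ : IsIdeal J) : J ⊆ Submodule.span ℂ {p : B | p ∈ J ∧ 0 ≤ p} := by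
  have hsa {x : B} (hx : x ∈ J) (hsa : IsSelfAdjoint x) :
      x ∈ Submodule.span ℂ {p : B | p ∈ J ∧ 0 ≤ p} := by
    rw [← CFC.posPart_sub_negPart x]
    exact sub_mem (Submodule.subset_span ⟨hJ.cfcₙ_mem _ hx hsa, CFC.posPart_nonneg x⟩)
      (Submodule.subset_span ⟨hJ.cfcₙ_mem _ hx hsa, CFC.negPart_nonneg x⟩)
  have hreal {x : B} (hx : x ∈ J) : (ℜ x : B) ∈ Submodule.span ℂ {p : B | p ∈ J ∧ 0 ≤ p} := by
    refine hsa ?_ (ℜ x).2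
    rw [realPart_apply_coe, ← Complex.coe_smul]
    exact hJ.smul_mem _ (hJ.add_mem hx (hJ.star_mem hx))
  intro b hb
  have himag : (ℑ b : B) ∈ Submodule.span ℂ {p : B | p ∈ J ∧ 0 ≤ p} := by
    simpa [realPart_I_smul] using hreal (hJ.smul_mem Complex.I hb)
  rw [← realPart_add_I_smul_imaginaryPart b]
  exact add_mem (hreal hb) (Submodule.smul_mem _ _ himag)

end IsIdeal

section ResidualKernel

variable {C : Type*} [NonUnitalCStarAlgebra C] [PartialOrder C] [StarOrderedRing C]

/-- The left kernel of `E` modulo `J`. For a residually symmetric expectation onto `A` this is an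
ideal with the same restriction to `A` as `J`. -/
def residualKernel (E : B → C) (J : Set C) : Set B := {b | E (star b * b) ∈ J}

omit [PartialOrder B] [StarOrderedRing B] [PartialOrder C] [StarOrderedRing C] in
lemma smul_mem_residualKernel {E : B →ₗ[ℂ] C} {J : Set C} (hJ : IsIdeal J) (c : ℂ) {x : B}
    (hx : x ∈ residualKernel E J) : c • x ∈ residualKernel E J := by
  rw [residualKernel, Set.mem_ofPred_eq, star_smul, smul_mul_assoc, mul_smul_comm, map_smul,
    map_smul]
  exact hJ.smul_mem _ (hJ.smul_mem _ hx)

variable {E : B →ₚ[ℂ] C} {J : Set C}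

lemma add_mem_residualKernel (hJ : IsIdeal J) {x y : B} (hx : x ∈ residualKernel E J)
    (hy : y ∈ residualKernel E J) : x + y ∈ residualKernel E J := by
  refine hJ.mem_of_nonneg_of_le (E.map_nonneg (star_mul_self_nonneg _))
    (OrderHomClass.mono E (star_add_mul_self_le x y)) ?_
  rw [two_nsmul, map_add, map_add]
  exact hJ.add_mem (hJ.add_mem hx hy) (hJ.add_mem hx hy)

lemma mul_left_mem_residualKernel (hJ : IsIdeal J) (c : B) {x : B}
    (hx : x ∈ residualKernel E J) : c * x ∈ residualKernel E J := by
  have hle : star (c * x) * (c * x) ≤ ‖star c * c‖ • (star x * x) := by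
    simpa only [star_mul, mul_assoc] using
      CStarAlgebra.star_left_conjugate_le_norm_smul (a := x) (.star_mul_self c)
  refine hJ.mem_of_nonneg_of_le (E.map_nonneg (star_mul_self_nonneg _))
    (OrderHomClass.mono E hle) ?_
  rw [← Complex.coe_smul, map_smul]
  exact hJ.smul_mem _ hx

lemma isIdeal_residualKernel (hJ : IsIdeal J)
    (hsymm : ∀ b, E (star b * b) ∈ J → E (b * star b) ∈ J) : IsIdeal (residualKernel E J) := by
  have hstar {b : B} (hb : b ∈ residualKernel E J) : star b ∈ residualKernel E J := by
    simpa only [residualKernel, Set.mem_ofPred_eq, star_star] using hsymm b hb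
  have hright {b : B} (hb : b ∈ residualKernel E J) (c : B) : b * c ∈ residualKernel E J := by
    simpa only [star_mul, star_star] using
      hstar (mul_left_mem_residualKernel hJ (star c) (hstar hb))
  have hcont : Continuous fun b => E (star b * b) := by fun_prop
  exact ⟨Set.subset_univ _, hJ.isClosed.preimage hcont,
    by simpa [residualKernel] using hJ.zero_mem,
    fun _ hx _ hy => add_mem_residualKernel hJ hx hy,
    fun c _ hx => smul_mem_residualKernel (E := E.toLinearMap) hJ c hx,
    fun _ hx c _ => ⟨mul_left_mem_residualKernel hJ c hx, hright hx c⟩⟩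

end ResidualKernel

/-- Residual symmetry of `E`, regarded as a self-map of `B` with values in `A`: it makes the left
kernel of `E` modulo a restricted ideal closed under `star`. -/
def ResiduallySymmetric (A : Set B) (E : B → B) : Prop :=
  ∀ I : Set B, IsRestricted A I → ∀ b : B, E (star b * b) ∈ I → E (b * star b) ∈ I

/-- Residual faithfulness of `E`, regarded as a self-map of `B` with values in `A`: the left kernel
of `E` modulo a restricted ideal `I` is contained in the ideal `BIB` induced by `I`. -/
def ResiduallyFaithful (A : Set B) (E : B → B) : Prop :=
  ∀ I : Set B, IsRestricted A I → ∀ b : B, E (star b * b) ∈ I → b ∈ idealGen I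

/-- `E`, regarded as a self-map of `B`, preserves ideals. -/
def PreservesIdeals (E : B → B) : Prop :=
  ∀ J : Set B, IsIdeal J → ∀ b ∈ J, E b ∈ J

section Expectation

variable {A : Set B}

lemma residualKernel_inter {E : B → B} (hA : IsSubCStar A) (hEid : ∀ a ∈ A, E a = a)
    {J : Set B} (hJ : IsIdeal J) : residualKernel E J ∩ A = J ∩ A := by
  obtain ⟨-, -, -, -, hmul, hstar⟩ := hA
  ext a
  refine and_congr_left fun ha => ?_
  rw [residualKernel, Set.mem_ofPred_eq, hEid _ (hmul _ (hstar a ha) a ha),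
    hJ.star_mul_self_mem_iff]

lemma SeparatesIdeals.residualKernel_eq {E : B →ₚ[ℂ] B} (hsep : SeparatesIdeals A)
    (hA : IsSubCStar A) (hEmem : ∀ b, E b ∈ A) (hEid : ∀ a ∈ A, E a = a)
    (hEsymm : ResiduallySymmetric A E) {J : Set B} (hJ : IsIdeal J) : residualKernel E J = J :=
  hsep _ _ (isIdeal_residualKernel hJ fun b hb => (hEsymm _ ⟨J, hJ, rfl⟩ b ⟨hb, hEmem _⟩).1) hJ
    (residualKernel_inter hA hEid hJ)

lemma map_mem_of_subset_residualKernel {E : B →ₗ[ℂ] B} {J : Set B} (hJ : IsIdeal J)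
    (h : J ⊆ residualKernel E J) {b : B} (hb : b ∈ J) : E b ∈ J := by
  have hspan := hJ.subset_span_nonneg hb
  clear hb
  induction hspan using Submodule.span_induction with
  | mem p hp =>
    obtain ⟨c, rfl⟩ := CStarAlgebra.nonneg_iff_eq_star_mul_self.1 hp.2
    exact h (hJ.star_mul_self_mem_iff.1 hp.1)
  | zero => simpa only [map_zero] using hJ.zero_mem
  | add x y _ _ hx hy => simpa only [map_add] using hJ.add_mem hx hy
  | smul c x _ hx => simpa only [map_smul] using hJ.smul_mem c hx

lemma separatesIdeals_of_residuallyFaithful_of_preservesIdeals {E : B → B}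
    (hEmem : ∀ b, E b ∈ A) (hfaith : ResiduallyFaithful A E) (hpres : PreservesIdeals E) :
    SeparatesIdeals A :=
  separatesIdeals_iff.2 fun J hJ =>
    (idealGen_subset hJ Set.inter_subset_left).antisymm fun b hb =>
      hfaith _ ⟨J, hJ, rfl⟩ b ⟨hpres J hJ _ (hJ.star_mul_self_mem_iff.2 hb), hEmem _⟩

end Expectation

end KM

theorem stmt2_general {A : Set B} (hA : IsSubCStar A) (E : B →ₚ[ℂ] B)
    (hEmem : ∀ b, E b ∈ A) (hEid : ∀ a ∈ A, E a = a) (hEsymm : ResiduallySymmetric A E) :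
    SeparatesIdeals A ↔ ResiduallyFaithful A E ∧ PreservesIdeals E := by
  refine ⟨fun hsep => ?_, fun ⟨hfaith, hpres⟩ =>
    separatesIdeals_of_residuallyFaithful_of_preservesIdeals hEmem hfaith hpres⟩
  have hker {J : Set B} (hJ : IsIdeal J) : residualKernel E J = J :=
    hsep.residualKernel_eq hA hEmem hEid hEsymm hJ
  constructor
  · rintro _ ⟨J, hJ, rfl⟩ b hb
    rw [separatesIdeals_iff.1 hsep J hJ, ← hker hJ]
    exact hb.1
  · exact fun J hJ _ => map_mem_of_subset_residualKernel (E := E.toLinearMap) hJ (hker hJ).ge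

/-- For a symmetric C*-inclusion `A ⊆ B` with a residually symmetric conditional
expectation `E : B → A`, the subalgebra `A` separates ideals in `B` iff `E` is residually
faithful and preserves ideals. -/
theorem stmt2 (A : Set B) (hA : IsSubCStar A) (hsym : SymmetricInclusion A)
    (E : B →ₗ[ℂ] B)
    (hEmem : ∀ b : B, E b ∈ A)
    (hEnorm : ∀ b : B, ‖E b‖ ≤ ‖b‖)
    (hEid : ∀ a ∈ A, E a = a)
    (hEpos : ∀ b : B, 0 ≤ b → 0 ≤ E b)
    (hEbimod : ∀ a ∈ A, ∀ c ∈ A, ∀ b : B, E (a * b * c) = a * E b * c)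
    (hEressym : ∀ I : Set B, IsRestricted A I → ∀ b : B,
      E (star b * b) ∈ I → E (b * star b) ∈ I) :
    SeparatesIdeals A ↔
      ((∀ I : Set B, IsRestricted A I → ∀ b : B, E (star b * b) ∈ I → b ∈ idealGen I) ∧
        (∀ J : Set B, IsIdeal J → ∀ b ∈ J, E b ∈ J)) :=
  stmt2_general hA (.mk₀ E hEpos) hEmem hEid hEressym
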